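/- arXiv:2405.07296 — 2 statements merged into one kernel-verified Lean document; each statement's English description precedes it below -/
import Mathlib

section
/- Let m ∈ ℕ with m ≥ 1, let h : ℕ^m → ℕ be a polynomial in m variables with coefficients in ℕ and no constant term, and let A ⊆ ℕ. Then the following are equivalent: (1) there exist functions α₁,…,α_m : 𝒫_f(ℕ^ℕ) → ℕ and H₁,…,H_m : 𝒫_f(ℕ^ℕ) → 𝒫_f(ℕ) such that (a) whenever F ⊊ G in 𝒫_f(ℕ^ℕ), max H_j(F) < min H_j(G) for every j ∈ {1,…,m}, and (b) whenever G₁ ⊊ G₂ ⊊ ⋯ ⊊ G_n ⊊ ⋯ is an infinite strictly increasing chain in 𝒫_f(ℕ^ℕ), f_i ∈ G_i for each i ∈ ℕ, and β₁ < ⋯ < β_m are in 𝒫_f(ℕ), then h(Σ_{i∈β₁}(α₁(G_i)+Σ_{t∈H₁(G_i)}f_i(t)), …, Σ_{i∈β_m}(α_m(G_i)+Σ_{t∈H_m(G_i)}f_i(t))) ∈ A; (2) there exist idempotent ultrafilters p₁,…,p_m ∈ 𝒥 such that A ∈ h̃(⊗_{i=1}^m p_i), where h̃ denotes the pushforward of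 ultrafilters along h. -/
namespace MultiCST

/-- The sum `p + q` of ultrafilters on ℕ: `A ∈ p + q` iff `{x : {y : x+y ∈ A} ∈ q} ∈ p`. -/
def uAdd (p q : Ultrafilter ℕ) : Ultrafilter ℕ :=
  p.bind fun x => q.map fun y => x + y

/-- `A ⊆ ℕ` is a J-set. -/
def IsJSet (A : Set ℕ) : Prop :=
  ∀ F : Finset (ℕ → ℕ), F.Nonempty →
    ∃ (a : ℕ) (β : Finset ℕ), β.Nonempty ∧ ∀ f ∈ F, a + ∑ t ∈ β, f t ∈ A

/-- `p ∈ 𝒥`: every member of `p` is a J-set. -/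
def MemJ (p : Ultrafilter ℕ) : Prop := ∀ A : Set ℕ, A ∈ p → IsJSet A

/-- `p` is an idempotent ultrafilter. -/
def IdempotentUF (p : Ultrafilter ℕ) : Prop := uAdd p p = p

/-- `p` is a minimal idempotent ultrafilter. -/
def IsMinimalIdempotent (p : Ultrafilter ℕ) : Prop :=
  IdempotentUF p ∧
    ∀ q : Ultrafilter ℕ, IdempotentUF q → uAdd q p = q → uAdd p q = q → q = p

/-- Tensor product `⊗_{i=1}^m p_i` of ultrafilters on ℕ, as an ultrafilter on `Fin m → ℕ`. -/
def tensor : ∀ m : ℕ, (Fin m → Ultrafilter ℕ) → Ultrafilter (Fin m → ℕ)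
  | 0, _ => pure fun i => i.elim0
  | m + 1, p =>
      (p 0).bind fun x => (tensor m fun i => p i.succ).map fun v => Fin.cons x v

/-- `f : ℕ → ℕ` is (given by) a polynomial with coefficients in ℕ and zero constant term. -/
def IsPolyZeroConst (f : ℕ → ℕ) : Prop :=
  ∃ P : Polynomial ℕ, P.coeff 0 = 0 ∧ ∀ x, f x = P.eval x

/-- The linear combination `a₁·p₁ + a₂·p₂ + ⋯ + a_m·p_m` of ultrafilters on ℕ. -/
def linComb : ∀ m : ℕ, (Fin m → ℕ) → (Fin m → Ultrafilter ℕ) → Ultrafilter ℕ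
  | 0, _, _ => pure 0
  | m + 1, a, p =>
      uAdd ((p 0).map fun x => a 0 * x)
        (linComb m (fun i => a i.succ) fun i => p i.succ)

theorem mem_uAdd (p q : Ultrafilter ℕ) (A : Set ℕ) :
    A ∈ uAdd p q ↔ {x | {y | x + y ∈ A} ∈ q} ∈ p := Iff.rfl

theorem mem_tensor_succ (m : ℕ) (p : Fin (m + 1) → Ultrafilter ℕ) (B : Set (Fin (m + 1) → ℕ)) :
    B ∈ tensor (m + 1) p ↔
      {x | {v | (Fin.cons x v : Fin (m + 1) → ℕ) ∈ B} ∈ tensor m (fun i => p i.succ)} ∈ p 0 :=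
  Iff.rfl

/-- J-sets are partition regular (via Hales–Jewett). -/
theorem IsJSet.of_union {A B : Set ℕ} (hAB : IsJSet (A ∪ B)) : IsJSet A ∨ IsJSet B := by
  classical
  by_contra hcon
  push Not at hcon
  obtain ⟨hA, hB⟩ := hcon
  unfold IsJSet at hA hB
  push Not at hA hB
  obtain ⟨F₁, hF₁, h1⟩ := hA
  obtain ⟨F₂, hF₂, h2⟩ := hB
  let X := {x // x ∈ F₁ ∪ F₂}
  obtain ⟨ι, hι, hHJ⟩ := Combinatorics.Line.exists_mono_in_high_dimension X Prop
  obtain ⟨e⟩ : Nonempty (ℕ × ι ↪ ℕ) := nonempty_embedding_nat (ℕ × ι)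
  let g : (ι → X) → ℕ → ℕ := fun w t => ∑ i, (w i).1 (e (t, i))
  obtain ⟨f₁, hf₁⟩ := hF₁
  let x₀ : X := ⟨f₁, Finset.mem_union_left _ hf₁⟩
  obtain ⟨a, β, hβ, hab⟩ := hAB (Finset.univ.image g)
    ⟨g (fun _ => x₀), Finset.mem_image_of_mem _ (Finset.mem_univ _)⟩
  obtain ⟨l, c, hc⟩ := hHJ (fun w => a + ∑ t ∈ β, g w t ∈ A)
  let V : Finset ι := Finset.univ.filter fun i => l.idxFun i = none
  let β' : Finset ℕ := (β ×ˢ V).map e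
  let a' : ℕ := a + ∑ t ∈ β, ∑ i ∈ Finset.univ.filter (fun i => ¬ l.idxFun i = none),
    ((l.idxFun i).getD x₀).1 (e (t, i))
  have key : ∀ x : X, a + ∑ t ∈ β, g (l x) t = a' + ∑ t ∈ β', x.1 t := by
    intro x
    have : ∀ t, g (l x) t = (∑ i ∈ Finset.univ.filter (fun i => ¬ l.idxFun i = none),
        ((l.idxFun i).getD x₀).1 (e (t, i))) + ∑ i ∈ V, x.1 (e (t, i)) := by
      intro t
      simp only [g, V]
      rw [← Finset.sum_filter_add_sum_filter_not Finset.univ (fun i => l.idxFun i = none), add_comm]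
      congr 1
      · refine Finset.sum_congr rfl fun i hi => ?_
        rw [Finset.mem_filter] at hi
        obtain ⟨y, hy⟩ := Option.ne_none_iff_exists'.1 hi.2
        rw [Combinatorics.Line.apply_some hy, hy]
        rfl
      · refine Finset.sum_congr rfl fun i hi => ?_
        rw [Finset.mem_filter] at hi
        rw [Combinatorics.Line.apply_none _ _ _ hi.2]
    simp only [this, Finset.sum_add_distrib, a', β', Finset.sum_map, Finset.sum_product]
    ring
  have hβ' : β'.Nonempty := by
    obtain ⟨i, hi⟩ := l.proper
    obtain ⟨t, ht⟩ := hβ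
    exact ⟨e (t, i), by simp [β', V, ht, hi]⟩
  have hAll : ∀ x : X, a' + ∑ t ∈ β', x.1 t ∈ A ∪ B := by
    intro x
    rw [← key]
    exact hab _ (Finset.mem_image_of_mem _ (Finset.mem_univ _))
  by_cases hcc : c
  · obtain ⟨f, hf, hfA⟩ := h1 a' β' hβ'
    have := hc ⟨f, Finset.mem_union_left _ hf⟩
    simp only [key, hcc, eq_iff_iff, iff_true] at this
    exact hfA this
  · obtain ⟨f, hf, hfB⟩ := h2 a' β' hβ'
    have := hc ⟨f, Finset.mem_union_right _ hf⟩
    simp only [key, hcc, eq_iff_iff, iff_false] at this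
    rcases hAll ⟨f, Finset.mem_union_right _ hf⟩ with h | h
    · exact this h
    · exact hfB h

theorem IsJSet.mono {A B : Set ℕ} (hA : IsJSet A) (hAB : A ⊆ B) : IsJSet B := by
  intro F hF
  obtain ⟨a, β, hβ, h⟩ := hA F hF
  exact ⟨a, β, hβ, fun f hf => hAB (h f hf)⟩

theorem not_isJSet_empty : ¬ IsJSet ∅ := by
  intro h
  obtain ⟨a, β, _, h⟩ := h {fun _ => 0} (Finset.singleton_nonempty _)
  exact h _ (Finset.mem_singleton_self _)

/-- The filter of sets whose complement is not a J-set. -/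
def jFilter : Filter ℕ where
  sets := {A | ¬ IsJSet Aᶜ}
  univ_sets := by simpa using not_isJSet_empty
  sets_of_superset := fun hA hAB hB => hA (hB.mono (Set.compl_subset_compl.2 hAB))
  inter_sets := by
    intro A B hA hB h
    rw [Set.compl_inter] at h
    exact h.of_union.elim hA hB

theorem memJ_of_le {p : Ultrafilter ℕ} (hp : (p : Filter ℕ) ≤ jFilter) : MemJ p := by
  intro A hA
  by_contra hJ
  have : Aᶜ ∈ p := hp (show ¬ IsJSet Aᶜᶜ by rwa [compl_compl])
  exact Ultrafilter.compl_mem_iff_notMem.1 this hA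

theorem isClosed_memJ : IsClosed {p : Ultrafilter ℕ | MemJ p} := by
  have : {p : Ultrafilter ℕ | MemJ p} = ⋂ A : {A : Set ℕ // ¬ IsJSet A}, {p | A.1ᶜ ∈ p} := by
    ext p
    simp only [Set.mem_ofPred_eq, Set.mem_iInter, Subtype.forall, MemJ,
      Ultrafilter.compl_mem_iff_notMem]
    exact forall_congr' fun A => not_imp_not.symm
  rw [this]
  exact isClosed_iInter fun A => ultrafilter_isClosed_basic _

theorem MemJ.add {p q : Ultrafilter ℕ} (hq : MemJ q) : MemJ (uAdd p q) := by
  intro A hA F hF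
  rw [mem_uAdd] at hA
  obtain ⟨x, hx⟩ := p.nonempty_of_mem hA
  obtain ⟨a, β, hβ, h⟩ := hq _ hx F hF
  exact ⟨x + a, β, hβ, fun f hf => by rw [add_assoc]; exact h f hf⟩

/-- Idempotents in `𝒥` inside a directed family of J-sets with the semigroup property. -/
theorem exists_idem {I : Type} [Nonempty I] (T : I → Set ℕ)
    (hdir : ∀ i j, ∃ k, T k ⊆ T i ∧ T k ⊆ T j)
    (hJ : ∀ i, IsJSet (T i))
    (hadd : ∀ i, ∀ x ∈ T i, ∃ j, ∀ y ∈ T j, x + y ∈ T i) :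
    ∃ p : Ultrafilter ℕ, IdempotentUF p ∧ MemJ p ∧ ∀ i, T i ∈ p := by
  let _ : AddSemigroup (Ultrafilter ℕ) := Ultrafilter.addSemigroup
  have hcoe : ∀ p q : Ultrafilter ℕ, p + q = uAdd p q := by
    intro p q
    ext A
    exact Ultrafilter.eventually_add p q (fun x => x ∈ A)
  let S : Set (Ultrafilter ℕ) := {p | MemJ p} ∩ ⋂ i, {p | T i ∈ p}
  have hSne : S.Nonempty := by
    have hne : (jFilter ⊓ ⨅ i, Filter.principal (T i)).NeBot := by
      rw [inf_iInf]
      refine Filter.iInf_neBot_of_directed' ?_ ?_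
      · intro i j
        obtain ⟨k, h1, h2⟩ := hdir i j
        exact ⟨k, inf_le_inf_left _ (Filter.principal_mono.2 h1),
          inf_le_inf_left _ (Filter.principal_mono.2 h2)⟩
      · intro i
        rw [Filter.inf_principal_neBot_iff]
        intro U hU
        by_contra hemp
        rw [Set.not_nonempty_iff_eq_empty] at hemp
        refine hU ((hJ i).mono ?_)
        intro x hx hxU
        have : x ∈ U ∩ T i := ⟨hxU, hx⟩
        rw [hemp] at this
        exact this
    obtain ⟨p, hp⟩ := Ultrafilter.exists_le (jFilter ⊓ ⨅ i, Filter.principal (T i))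
    refine ⟨p, memJ_of_le (hp.trans inf_le_left), ?_⟩
    simp only [Set.mem_iInter, Set.mem_ofPred_eq]
    intro i
    have hle : (p : Filter ℕ) ≤ Filter.principal (T i) :=
      hp.trans (inf_le_right.trans (iInf_le (fun i => Filter.principal (T i)) i))
    exact Filter.le_principal_iff.1 hle
  have hSc : IsCompact S :=
    (isClosed_memJ.inter (isClosed_iInter fun i => ultrafilter_isClosed_basic _)).isCompact
  obtain ⟨p, hpS, hp⟩ := exists_idempotent_in_compact_add_subsemigroup
    (fun r => Ultrafilter.continuous_add_left r) S hSne hSc (by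
      rintro p ⟨-, hpT⟩ q ⟨hq, hqT⟩
      rw [hcoe]
      refine ⟨MemJ.add hq, ?_⟩
      simp only [Set.mem_iInter, Set.mem_ofPred_eq] at hpT hqT ⊢
      intro i
      rw [mem_uAdd]
      filter_upwards [hpT i] with x hx
      obtain ⟨j, hj⟩ := hadd i x hx
      filter_upwards [hqT j] with y hy using hj y hy)
  refine ⟨p, ?_, hpS.1, ?_⟩
  · rw [IdempotentUF, ← hcoe]; exact hp
  · simpa using hpS.2

/-- Chains above `K`. -/
def IsSeq (K : Finset (ℕ → ℕ)) (G : ℕ → Finset (ℕ → ℕ)) (f : ℕ → ℕ → ℕ) : Prop :=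
  K ⊂ G 0 ∧ StrictMono G ∧ ∀ i, f i ∈ G i

/-- Sums along chains above `K`. -/
def chainSums (g : Finset (ℕ → ℕ) → (ℕ → ℕ) → ℕ) (K : Finset (ℕ → ℕ)) : Set ℕ :=
  {x | ∃ G f n, IsSeq K G f ∧ 0 < n ∧ x = ∑ i ∈ Finset.range n, g (G i) (f i)}

/-- Concatenation of sequences. -/
def cat {X : Type} (n : ℕ) (u v : ℕ → X) (i : ℕ) : X := if i < n then u i else v (i - n)

theorem cat_lt {X : Type} {n : ℕ} {u v : ℕ → X} {i : ℕ} (h : i < n) : cat n u v i = u i :=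
  if_pos h

theorem cat_add {X : Type} {n : ℕ} {u v : ℕ → X} {i : ℕ} : cat n u v (i + n) = v i := by
  simp [cat]

theorem IsSeq.mono {K K' G f} (h : IsSeq K G f) (hK : K' ⊆ K) : IsSeq K' G f :=
  ⟨lt_of_le_of_lt hK h.1, h.2⟩

theorem IsSeq.cat {K G f G' f'} {n : ℕ} (hn : 0 < n) (h : IsSeq K G f) (h' : IsSeq (G n) G' f') :
    IsSeq K (cat n G G') (cat n f f') := by
  refine ⟨by rw [cat_lt hn]; exact h.1, ?_, ?_⟩
  · refine strictMono_nat_of_lt_succ fun i => ?_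
    rcases lt_trichotomy (i + 1) n with hi | hi | hi
    · rw [cat_lt hi, cat_lt (by omega)]
      exact h.2.1 (Nat.lt_succ_self i)
    · rw [cat_lt (by omega)]
      have : i + 1 = 0 + n := by omega
      rw [this, cat_add]
      exact lt_trans (h.2.1 (by omega)) h'.1
    · obtain ⟨k, rfl⟩ : ∃ k, i = k + n := ⟨i - n, by omega⟩
      have : k + n + 1 = (k + 1) + n := by omega
      rw [this, cat_add, cat_add]
      exact h'.2.1 (Nat.lt_succ_self k)
  · intro i
    by_cases hi : i < n
    · rw [cat_lt hi, cat_lt hi]; exact h.2.2 i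
    · obtain ⟨k, rfl⟩ : ∃ k, i = k + n := ⟨i - n, by omega⟩
      rw [cat_add, cat_add]; exact h'.2.2 k

theorem exists_big (K : Finset (ℕ → ℕ)) : ∃ K', K ⊂ K' := by
  classical
  obtain ⟨f, hf⟩ := Infinite.exists_notMem_finset K
  exact ⟨insert f K, Finset.ssubset_insert hf⟩

theorem chainSums_mono (g) {K K'} (hK : K' ⊆ K) : chainSums g K ⊆ chainSums g K' := by
  rintro x ⟨G, f, n, h, hn, hx⟩
  exact ⟨G, f, n, h.mono hK, hn, hx⟩

theorem chainSums_isJSet (α : Finset (ℕ → ℕ) → ℕ) (H : Finset (ℕ → ℕ) → Finset ℕ)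
    (hH : ∀ F, F.Nonempty → (H F).Nonempty) (K) :
    IsJSet (chainSums (fun F f => α F + ∑ t ∈ H F, f t) K) := by
  classical
  intro F hF
  obtain ⟨G₀, hG₀⟩ := exists_big (K ∪ F)
  have : NoMaxOrder (Finset (ℕ → ℕ)) := ⟨exists_big⟩
  obtain ⟨G, hG, hG0⟩ := Nat.exists_strictMono' G₀
  have hFG : ∀ f ∈ F, ∀ i, f ∈ G i := fun f hf i =>
    hG.monotone (Nat.zero_le i) (by rw [hG0]; exact hG₀.1 (Finset.mem_union_right _ hf))
  refine ⟨α G₀, H G₀, hH _ ?_, fun f hf => ?_⟩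
  · exact hF.mono (Finset.subset_union_right.trans hG₀.1)
  · refine ⟨G, fun _ => f, 1, ⟨?_, hG, fun i => hFG f hf i⟩, one_pos, ?_⟩
    · rw [hG0]; exact lt_of_le_of_lt Finset.subset_union_left hG₀
    · simp [hG0]

theorem sum_range_cat (g : Finset (ℕ → ℕ) → (ℕ → ℕ) → ℕ) (n : ℕ) (G f G' f') :
    ∑ i ∈ Finset.range n, g (cat n G G' i) (cat n f f' i) =
      ∑ i ∈ Finset.range n, g (G i) (f i) := by
  refine Finset.sum_congr rfl fun i hi => ?_
  rw [cat_lt (Finset.mem_range.1 hi), cat_lt (Finset.mem_range.1 hi)]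

theorem chainSums_add (g) (K) : ∀ x ∈ chainSums g K, ∃ K', ∀ y ∈ chainSums g K',
    x + y ∈ chainSums g K := by
  rintro x ⟨G, f, n, h, hn, rfl⟩
  refine ⟨G n, ?_⟩
  rintro y ⟨G', f', n', h', hn', rfl⟩
  refine ⟨cat n G G', cat n f f', n + n', h.cat hn h', by omega, ?_⟩
  rw [Finset.sum_range_add, sum_range_cat]
  congr 1
  refine Finset.sum_congr rfl fun i _ => ?_
  rw [add_comm n i, cat_add, cat_add]

theorem mem_tensor_of_chains (m : ℕ) : ∀ (p : Fin m → Ultrafilter ℕ)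
    (g : Fin m → Finset (ℕ → ℕ) → (ℕ → ℕ) → ℕ)
    (_ : ∀ l K, chainSums (g l) K ∈ p l) (K : Finset (ℕ → ℕ)) (B : Set (Fin m → ℕ))
    (_ : ∀ G f, IsSeq K G f → ∀ β : Fin m → Finset ℕ, (∀ l, (β l).Nonempty) →
      (∀ l l' : Fin m, l < l' → ∀ x ∈ β l, ∀ y ∈ β l', x < y) →
      (fun l => ∑ i ∈ β l, g l (G i) (f i)) ∈ B), B ∈ tensor m p := by
  induction m with
  | zero =>
    intro p g hp K B hB
    have : NoMaxOrder (Finset (ℕ → ℕ)) := ⟨exists_big⟩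
    obtain ⟨K', hK'⟩ := exists_big K
    obtain ⟨G, hG, hG0⟩ := Nat.exists_strictMono' K'
    have hne : ∀ i, (G i).Nonempty := fun i => by
      obtain ⟨f, hf, -⟩ := Finset.exists_of_ssubset hK'
      exact ⟨f, hG.monotone (Nat.zero_le i) (by rw [hG0]; exact hf)⟩
    choose f hf using hne
    have := hB G f ⟨by rw [hG0]; exact hK', hG, hf⟩ (fun i => i.elim0) (fun i => i.elim0)
      (fun i => i.elim0)
    change (fun i : Fin 0 => (i.elim0 : ℕ)) ∈ B
    convert this using 1
  | succ m ih =>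
    intro p g hp K B hB
    rw [mem_tensor_succ]
    filter_upwards [hp 0 K]
    rintro x ⟨G, f, n, h, hn, rfl⟩
    refine ih _ (fun l => g l.succ) (fun l K => hp l.succ K) (G n) _ ?_
    intro G' f' h' β hβ hββ
    have := hB _ _ (h.cat hn h')
      (Fin.cons (Finset.range n) fun l => (β l).map (addRightEmbedding n))
      (by
        intro l
        refine Fin.cases ?_ (fun l => ?_) l
        · simpa using hn.ne'
        · simpa using hβ l)
      (by
        intro l l'
        refine Fin.cases ?_ (fun l => ?_) l
        · refine Fin.cases ?_ (fun l' => ?_) l'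
          · simp
          · intro _ x hx y hy
            simp at hx hy
            omega
        · refine Fin.cases ?_ (fun l' => ?_) l'
          · simp
          · intro hl x hx y hy
            simp only [Fin.cons_succ, Finset.mem_map, addRightEmbedding_apply] at hx hy
            obtain ⟨x, hx, rfl⟩ := hx
            obtain ⟨y, hy, rfl⟩ := hy
            have := hββ l l' (by simpa using hl) x hx y hy
            omega)
    change _ ∈ B
    convert this using 1
    funext l
    refine Fin.cases ?_ (fun l => ?_) l
    · simp only [Fin.cons_zero]
      rw [sum_range_cat]
    · simp only [Fin.cons_succ, Finset.sum_map, addRightEmbedding_apply, cat_add]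

/-- Recursive choice along strict inclusion of finite sets. -/
theorem exists_rec {D : Type} [Inhabited D]
    (R : Finset (ℕ → ℕ) → (Finset (ℕ → ℕ) → D) → D → Prop)
    (hR : ∀ F prev, ∃ d, R F prev d)
    (hcongr : ∀ F u v d, (∀ K, K ⊂ F → u K = v K) → R F u d → R F v d) :
    ∃ g : Finset (ℕ → ℕ) → D, ∀ F, R F g (g F) := by
  classical
  choose c hc using hR
  let g : Finset (ℕ → ℕ) → D :=
    (Finset.isWellFounded_ssubset (α := ℕ → ℕ)).wf.fix fun F ih =>
      c F fun K => if hK : K ⊂ F then ih K hK else default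
  have hg : ∀ F, g F = c F fun K => if K ⊂ F then g K else default := by
    intro F
    have := (Finset.isWellFounded_ssubset (α := ℕ → ℕ)).wf.fix_eq
      (fun F ih => c F fun K => if hK : K ⊂ F then ih K hK else (default : D)) F
    exact this
  refine ⟨g, fun F => ?_⟩
  have := hc F (fun K => if K ⊂ F then g K else default)
  rw [← hg] at this
  exact hcongr F _ _ _ (fun K hK => if_pos hK) this

theorem IsJSet.far {A : Set ℕ} (hA : IsJSet A) (N : ℕ) (F : Finset (ℕ → ℕ)) (hF : F.Nonempty) :
    ∃ (a : ℕ) (β : Finset ℕ), β.Nonempty ∧ (∀ y ∈ β, N ≤ y) ∧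
      ∀ f ∈ F, a + ∑ t ∈ β, f t ∈ A := by
  classical
  obtain ⟨a, β, hβ, h⟩ := hA (F.image fun f t => f (t + N)) (hF.image _)
  refine ⟨a, β.map (addRightEmbedding N), by simpa using hβ, ?_, fun f hf => ?_⟩
  · intro y hy
    simp only [Finset.mem_map, addRightEmbedding_apply] at hy
    obtain ⟨t, -, rfl⟩ := hy
    omega
  · have := h _ (Finset.mem_image_of_mem _ hf)
    simpa using this

/-- The starred version of a member of an idempotent. -/
def star (p : Ultrafilter ℕ) (C : Set ℕ) : Set ℕ := {x | x ∈ C ∧ {y | x + y ∈ C} ∈ p}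

theorem star_mem {p : Ultrafilter ℕ} (hp : IdempotentUF p) {C : Set ℕ} (hC : C ∈ p) :
    star p C ∈ p := by
  have : C ∈ uAdd p p := by rw [hp]; exact hC
  rw [mem_uAdd] at this
  exact Filter.inter_mem hC this

theorem star_shift {p : Ultrafilter ℕ} (hp : IdempotentUF p) {C : Set ℕ} {x : ℕ}
    (hx : x ∈ star p C) : {y | x + y ∈ star p C} ∈ p := by
  have h := star_mem hp hx.2
  filter_upwards [h] with y hy
  refine ⟨hy.1, ?_⟩
  filter_upwards [hy.2] with z hz
  rw [add_assoc]
  exact hz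

theorem sum_chain_le (g : Finset (ℕ → ℕ) → (ℕ → ℕ) → ℕ) {G : ℕ → Finset (ℕ → ℕ)}
    (hG : StrictMono G) {f : ℕ → ℕ → ℕ} (hf : ∀ i, f i ∈ G i) (s : Finset ℕ)
    (S : Finset (Finset (ℕ → ℕ))) (F : Finset (ℕ → ℕ))
    (hS : ∀ i ∈ s, G i ∈ S) (hF : ∀ i ∈ s, G i ⊆ F) :
    ∑ i ∈ s, g (G i) (f i) ≤ ∑ K ∈ S, ∑ φ ∈ F, g K φ := by
  classical
  calc ∑ i ∈ s, g (G i) (f i) ≤ ∑ i ∈ s, ∑ φ ∈ F, g (G i) φ := by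
        refine Finset.sum_le_sum fun i hi => ?_
        exact Finset.single_le_sum (f := fun φ => g (G i) φ) (fun _ _ => Nat.zero_le _)
          (hF i hi (hf i))
    _ = ∑ K ∈ s.image G, ∑ φ ∈ F, g K φ := by
        rw [Finset.sum_image (fun _ _ _ _ h => hG.injective h)]
    _ ≤ ∑ K ∈ S, ∑ φ ∈ F, g K φ := by
        refine Finset.sum_le_sum_of_subset ?_
        intro K hK
        obtain ⟨i, hi, rfl⟩ := Finset.mem_image.1 hK
        exact hS i hi

/-- One-variable step. -/
theorem single_step (p : Ultrafilter ℕ) (hp : IdempotentUF p) (hJ : MemJ p)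
    (C : Finset (ℕ → ℕ) → Set ℕ) (hC : ∀ F, C F ∈ p) :
    ∃ (α : Finset (ℕ → ℕ) → ℕ) (H : Finset (ℕ → ℕ) → Finset ℕ),
      (∀ F, F.Nonempty → (H F).Nonempty) ∧
      (∀ F G, F.Nonempty → F ⊂ G → ∀ x ∈ H F, ∀ y ∈ H G, x < y) ∧
      ∀ (G : ℕ → Finset (ℕ → ℕ)) (f : ℕ → ℕ → ℕ), StrictMono G → (∀ i, f i ∈ G i) → ∀ (F : Finset (ℕ → ℕ)) (β : Finset ℕ), β.Nonempty →
        (∀ i ∈ β, F ⊆ G i) → ∑ i ∈ β, (α (G i) + ∑ t ∈ H (G i), f i t) ∈ C F := by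
  classical
  let val : ℕ × Finset ℕ → (ℕ → ℕ) → ℕ := fun d f => d.1 + ∑ t ∈ d.2, f t
  obtain ⟨g, hg⟩ := exists_rec (D := ℕ × Finset ℕ)
    (fun F prev d => F.Nonempty → d.2.Nonempty ∧
      (∀ K, K ⊂ F → ∀ x ∈ (prev K).2, ∀ y ∈ d.2, x < y) ∧
      (∀ f ∈ F, ∀ K, K ⊆ F → val d f ∈ star p (C K)) ∧
      (∀ f ∈ F, ∀ K, K ⊆ F → ∀ x, x ≤ ∑ K' ∈ F.ssubsets, ∑ φ ∈ F, val (prev K') φ →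
        x ∈ star p (C K) → x + val d f ∈ star p (C K)))
    (by
      intro F prev
      by_cases hF : F.Nonempty
      swap
      · exact ⟨default, fun h => absurd h hF⟩
      set b := ∑ K' ∈ F.ssubsets, ∑ φ ∈ F, val (prev K') φ
      have hmem : (⋂ K ∈ F.powerset, star p (C K)) ∩
          (⋂ K ∈ F.powerset, ⋂ x ∈ Finset.range (b + 1),
            {y | x ∈ star p (C K) → x + y ∈ star p (C K)}) ∈ p := by
        refine Filter.inter_mem ?_ ?_
        · exact (Filter.biInter_finset_mem _).2 fun K _ => star_mem hp (hC K)
        · refine (Filter.biInter_finset_mem _).2 fun K _ =>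
            (Filter.biInter_finset_mem _).2 fun x _ => ?_
          by_cases hx : x ∈ star p (C K)
          · filter_upwards [star_shift hp hx] with y hy _ using hy
          · exact Filter.Eventually.of_forall fun y h => absurd h hx
      obtain ⟨a, β, hβ, hN, hab⟩ := (hJ _ hmem).far
        (F.ssubsets.sup (fun K => (prev K).2.sup id) + 1) F hF
      refine ⟨(a, β), fun _ => ⟨hβ, ?_, ?_, ?_⟩⟩
      · intro K hK x hx y hy
        have h1 := hN y hy
        have h2 : x ≤ (prev K).2.sup id := Finset.le_sup (f := id) hx
        have h3 : (prev K).2.sup id ≤ F.ssubsets.sup (fun K => (prev K).2.sup id) :=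
          Finset.le_sup (f := fun K => (prev K).2.sup id) (Finset.mem_ssubsets.2 hK)
        omega
      · intro f hf K hK
        have := (hab f hf).1
        simp only [Set.mem_iInter] at this
        exact this K (Finset.mem_powerset.2 hK)
      · intro f hf K hK x hx
        have := (hab f hf).2
        simp only [Set.mem_iInter] at this
        exact this K (Finset.mem_powerset.2 hK) x (Finset.mem_range.2 (by omega)))
    (by
      intro F u v d huv h hF
      obtain ⟨h1, h2, h3, h4⟩ := h hF
      refine ⟨h1, fun K hK => by rw [← huv K hK]; exact h2 K hK, h3, ?_⟩
      have : ∑ K' ∈ F.ssubsets, ∑ φ ∈ F, val (v K') φ =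
          ∑ K' ∈ F.ssubsets, ∑ φ ∈ F, val (u K') φ :=
        Finset.sum_congr rfl fun K hK => by rw [huv K (Finset.mem_ssubsets.1 hK)]
      rw [this]
      exact h4)
  refine ⟨fun F => (g F).1, fun F => (g F).2, fun F hF => (hg F hF).1, ?_, ?_⟩
  · intro F G hF hFG x hx y hy
    exact (hg G (hF.mono hFG.1)).2.1 F hFG x hx y hy
  · intro G f hG hf F β hβ hFβ
    suffices h : ∀ β : Finset ℕ, β.Nonempty → (∀ i ∈ β, F ⊆ G i) →
        ∑ i ∈ β, val (g (G i)) (f i) ∈ star p (C F) from (h β hβ hFβ).1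
    intro β
    induction β using Finset.induction_on_max with
    | empty => intro h; exact absurd h (by simp)
    | insert a s has ih =>
      intro _ hFs
      have hGa := hg (G a) ⟨f a, hf a⟩
      have hFa : F ⊆ G a := hFs a (Finset.mem_insert_self _ _)
      rw [Finset.sum_insert (fun h => lt_irrefl _ (has a h))]
      rcases s.eq_empty_or_nonempty with rfl | hs
      · simpa using hGa.2.2.1 (f a) (hf a) F hFa
      · rw [add_comm]
        refine hGa.2.2.2 (f a) (hf a) F hFa _ ?_
          (ih hs fun i hi => hFs i (Finset.mem_insert_of_mem hi))
        exact sum_chain_le (fun K φ => val (g K) φ) hG hf s _ _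
          (fun i hi => Finset.mem_ssubsets.2 (hG (has i hi))) (fun i hi => (hG (has i hi)).1)

theorem multi_step (m : ℕ) : ∀ (p : Fin m → Ultrafilter ℕ) (_ : ∀ i, IdempotentUF (p i))
    (_ : ∀ i, MemJ (p i)) (B : Finset (ℕ → ℕ) → Set (Fin m → ℕ)) (_ : ∀ F, B F ∈ tensor m p),
    ∃ (α : Fin m → Finset (ℕ → ℕ) → ℕ) (H : Fin m → Finset (ℕ → ℕ) → Finset ℕ),
      (∀ j F, F.Nonempty → (H j F).Nonempty) ∧
      (∀ j F G, F.Nonempty → F ⊂ G → ∀ x ∈ H j F, ∀ y ∈ H j G, x < y) ∧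
      ∀ (G : ℕ → Finset (ℕ → ℕ)) (f : ℕ → ℕ → ℕ), StrictMono G → (∀ i, f i ∈ G i) → ∀ (F : Finset (ℕ → ℕ)) (β : Fin m → Finset ℕ),
        (∀ l, (β l).Nonempty) →
        (∀ l l' : Fin m, l < l' → ∀ x ∈ β l, ∀ y ∈ β l', x < y) →
        (∀ l, ∀ i ∈ β l, F ⊆ G i) →
        (fun l => ∑ i ∈ β l, (α l (G i) + ∑ t ∈ H l (G i), f i t)) ∈ B F := by
  classical
  induction m with
  | zero =>
    intro p _ _ B hB
    refine ⟨fun i => i.elim0, fun i => i.elim0, fun i => i.elim0, fun i => i.elim0, ?_⟩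
    intro G f _ _ F β _ _ _
    have : (fun i : Fin 0 => (i.elim0 : ℕ)) ∈ B F := hB F
    convert this using 1
  | succ m ih =>
    intro p hp hJ B hB
    let sec : ℕ → Finset (ℕ → ℕ) → Set (Fin m → ℕ) :=
      fun x F => {v | (Fin.cons x v : Fin (m + 1) → ℕ) ∈ B F}
    let C : Finset (ℕ → ℕ) → Set ℕ := fun F => {x | sec x F ∈ tensor m (fun i => p i.succ)}
    obtain ⟨α₀, H₀, h1, h2, h3⟩ := single_step (p 0) (hp 0) (hJ 0) C
      (fun F => (mem_tensor_succ m p (B F)).1 (hB F))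
    let b : Finset (ℕ → ℕ) → ℕ := fun F =>
      ∑ K ∈ F.powerset, ∑ φ ∈ F, (α₀ K + ∑ t ∈ H₀ K, φ t)
    let B' : Finset (ℕ → ℕ) → Set (Fin m → ℕ) := fun F =>
      ⋂ K ∈ F.powerset, ⋂ x ∈ Finset.range (b F + 1), {v | x ∈ C K → v ∈ sec x K}
    have hB' : ∀ F, B' F ∈ tensor m (fun i => p i.succ) := by
      intro F
      refine (Filter.biInter_finset_mem _).2 fun K _ =>
        (Filter.biInter_finset_mem _).2 fun x _ => ?_
      by_cases hx : x ∈ C K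
      · have hx' : sec x K ∈ tensor m (fun i => p i.succ) := hx
        filter_upwards [hx'] with v hv _ using hv
      · exact Filter.Eventually.of_forall fun y h => absurd h hx
    obtain ⟨α', H', h1', h2', h3'⟩ := ih (fun i => p i.succ) (fun i => hp i.succ)
      (fun i => hJ i.succ) B' hB'
    refine ⟨Fin.cons α₀ α', Fin.cons H₀ H', ?_, ?_, ?_⟩
    · intro j
      refine Fin.cases ?_ (fun j => ?_) j
      · exact h1
      · exact h1' j
    · intro j
      refine Fin.cases ?_ (fun j => ?_) j
      · exact h2
      · exact h2' j
    · intro G f hG hf F β hβ hββ hF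
      set x := ∑ i ∈ β 0, (α₀ (G i) + ∑ t ∈ H₀ (G i), f i t) with hx
      have hxC : x ∈ C F := h3 G f hG hf F (β 0) (hβ 0) (hF 0)
      set M := (β 0).max' (hβ 0)
      have hM : M ∈ β 0 := Finset.max'_mem _ _
      have hle : ∀ i ∈ β 0, G i ⊆ G M := fun i hi => hG.monotone (Finset.le_max' _ _ hi)
      have hxb : x ≤ b (G M) := sum_chain_le (fun K φ => α₀ K + ∑ t ∈ H₀ K, φ t) hG hf (β 0)
        _ _ (fun i hi => Finset.mem_powerset.2 (hle i hi)) hle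
      have hv := h3' G f hG hf (G M) (fun l => β l.succ) (fun l => hβ l.succ)
        (fun l l' hl => hββ l.succ l'.succ (by simpa using hl))
        (fun l i hi => (hG (hββ 0 l.succ (Fin.succ_pos l) M hM i hi)).1)
      simp only [B', Set.mem_iInter] at hv
      have hv' := hv F (Finset.mem_powerset.2 (hF 0 M hM)) x (Finset.mem_range.2 (by omega)) hxC
      change Fin.cons x _ ∈ B F at hv'
      convert hv' using 1
      funext l
      refine Fin.cases ?_ (fun l => ?_) l
      · rfl
      · rfl

/-- Polynomial Milliken–Taylor / stronger central sets theorem, several idempotents,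
composed with a polynomial `h : ℕ^m → ℕ` with no constant term. -/
theorem polynomial_image_stronger_CST_II (m : ℕ) (hm : 1 ≤ m)
    (h : (Fin m → ℕ) → ℕ)
    (hh : ∃ Q : MvPolynomial (Fin m) ℕ,
      MvPolynomial.coeff 0 Q = 0 ∧ ∀ v, h v = MvPolynomial.eval v Q)
    (A : Set ℕ) :
    (∃ (α : Fin m → Finset (ℕ → ℕ) → ℕ) (H : Fin m → Finset (ℕ → ℕ) → Finset ℕ),
      (∀ (j : Fin m) (F : Finset (ℕ → ℕ)), F.Nonempty → (H j F).Nonempty) ∧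
      (∀ (j : Fin m) (F G : Finset (ℕ → ℕ)), F.Nonempty → F ⊂ G →
        ∀ x ∈ H j F, ∀ y ∈ H j G, x < y) ∧
      (∀ G : ℕ → Finset (ℕ → ℕ),
        (∀ i, (G i).Nonempty) → (∀ i j, i < j → G i ⊂ G j) →
        ∀ f : ℕ → ℕ → ℕ, (∀ i, f i ∈ G i) →
        ∀ β : Fin m → Finset ℕ,
          (∀ l, (β l).Nonempty) →
          (∀ l l' : Fin m, l < l' → ∀ x ∈ β l, ∀ y ∈ β l', x < y) →
          h (fun l => ∑ i ∈ β l, (α l (G i) + ∑ t ∈ H l (G i), f i t)) ∈ A))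
    ↔
    (∃ p : Fin m → Ultrafilter ℕ,
      (∀ i, IdempotentUF (p i)) ∧ (∀ i, MemJ (p i)) ∧ A ∈ (tensor m p).map h) := by
  constructor
  · rintro ⟨α, H, hne, -, hA⟩
    have hex : ∀ l : Fin m, ∃ p : Ultrafilter ℕ, IdempotentUF p ∧ MemJ p ∧
        ∀ K, chainSums (fun F f => α l F + ∑ t ∈ H l F, f t) K ∈ p := by
      intro l
      classical
      refine exists_idem _ (fun K K' => ⟨K ∪ K', ?_, ?_⟩) ?_ ?_
      · exact chainSums_mono _ Finset.subset_union_left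
      · exact chainSums_mono _ Finset.subset_union_right
      · exact chainSums_isJSet _ _ (hne l)
      · exact chainSums_add _
    choose p hp hJ hT using hex
    refine ⟨p, hp, hJ, ?_⟩
    change h ⁻¹' A ∈ tensor m p
    refine mem_tensor_of_chains m p _ hT ∅ _ ?_
    intro G f hG β hβ hββ
    exact hA G (fun i => ⟨f i, hG.2.2 i⟩) (fun i j hij => hG.2.1 hij) f hG.2.2 β hβ hββ
  · rintro ⟨p, hp, hJ, hA⟩
    obtain ⟨α, H, h1, h2, h3⟩ := multi_step m p hp hJ (fun _ => h ⁻¹' A) (fun _ => hA)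
    refine ⟨α, H, h1, h2, ?_⟩
    intro G _ hG f hf β hβ hββ
    exact h3 G f (fun i j hij => hG i j hij) hf ∅ β hβ hββ (fun _ _ _ => Finset.empty_subset _)

end MultiCST
end

section
/- Let T ∈ 𝒫_f(ℙ). Then the following two statements are equivalent. (1) For all r, m ∈ ℕ with r, m ≥ 1 and every partition ℕ^m = C₁ ∪ ⋯ ∪ C_r, there exist j ∈ {1,…,r} and functions α : 𝒫_f(ℕ^ℕ) → ℕ and H : 𝒫_f(ℕ^ℕ) → 𝒫_f(ℕ) such that (a) whenever F ⊊ G in 𝒫_f(ℕ^ℕ), max H(F) < min H(G), and (b) whenever G₁ ⊊ G₂ ⊊ ⋯ is an infinite strictly increasing chain in 𝒫_f(ℕ^ℕ), f_i ∈ G_i for each i ∈ ℕ, P₁,…,P_m ∈ T, and β₁ < ⋯ < β_m are in 𝒫_f(ℕ), then (Σ_{i∈β₁}α(G_i) + P₁(Σ_{i∈β₁}Σ_{t∈H(G_i)}f_i(t)), …, Σ_{i∈β_m}α(G_i) + P_m(Σ_{i∈β_m}Σ_{t∈H(G_i)}f_i(t))) ∈ C_j. (2) For all r, m ∈ ℕ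 with r, m ≥ 1, all a₁,…,a_m ∈ ℕ, and every partition ℕ = D₁ ∪ ⋯ ∪ D_r, there exist j ∈ {1,…,r} and functions α, H as above satisfying (a) and such that for every infinite strictly increasing chain G₁ ⊊ G₂ ⊊ ⋯ in 𝒫_f(ℕ^ℕ), all f_i ∈ G_i, all P₁,…,P_m ∈ T, and all β₁ < ⋯ < β_m in 𝒫_f(ℕ), one has Σ_{l=1}^m a_l·(Σ_{i∈β_l}α(G_i) + P_l(Σ_{i∈β_l}Σ_{t∈H(G_i)}f_i(t))) ∈ D_j. -/
namespace MultiCST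

section PET

variable {V : Type} [AddCommGroup V]

/-- Polynomial maps of degree at most `d` vanishing at zero. -/
def IsPoly : ℕ → (V → ℤ) → Prop
  | 0, Q => Q = 0
  | d + 1, Q => Q 0 = 0 ∧ ∀ y, IsPoly d (fun z => Q (y + z) - Q y - Q z)

theorem IsPoly.zero (d : ℕ) : IsPoly d (0 : V → ℤ) := by
  induction d with
  | zero => rfl
  | succ d ih =>
    refine ⟨rfl, fun y => ?_⟩
    convert ih using 1
    funext z; simp

theorem IsPoly.add {d : ℕ} : ∀ {Q R : V → ℤ}, IsPoly d Q → IsPoly d R → IsPoly d (Q + R) := by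
  induction d with
  | zero => intro Q R hQ hR; simp only [IsPoly] at *; simp [hQ, hR]
  | succ d ih =>
    intro Q R hQ hR
    refine ⟨by simp [hQ.1, hR.1], fun y => ?_⟩
    convert ih (hQ.2 y) (hR.2 y) using 1
    funext z; simp only [Pi.add_apply]; ring

theorem IsPoly.neg {d : ℕ} : ∀ {Q : V → ℤ}, IsPoly d Q → IsPoly d (-Q) := by
  induction d with
  | zero => intro Q hQ; simp only [IsPoly] at *; simp [hQ]
  | succ d ih =>
    intro Q hQ
    refine ⟨by simp [hQ.1], fun y => ?_⟩
    convert ih (hQ.2 y) using 1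
    funext z; simp only [Pi.neg_apply]; ring

theorem IsPoly.sub {d : ℕ} {Q R : V → ℤ} (hQ : IsPoly d Q) (hR : IsPoly d R) :
    IsPoly d (Q - R) := by
  rw [sub_eq_add_neg]; exact hQ.add hR.neg

theorem IsPoly.succ {d : ℕ} : ∀ {Q : V → ℤ}, IsPoly d Q → IsPoly (d + 1) Q := by
  induction d with
  | zero =>
    intro Q hQ
    simp only [IsPoly] at hQ
    subst hQ
    exact IsPoly.zero 1
  | succ d ih => intro Q hQ; exact ⟨hQ.1, fun y => ih (hQ.2 y)⟩

theorem IsPoly.mono {d e : ℕ} (h : d ≤ e) {Q : V → ℤ} (hQ : IsPoly d Q) : IsPoly e Q := by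
  induction h with
  | refl => exact hQ
  | step _ ih => exact ih.succ

theorem IsPoly.map_zero {d : ℕ} {Q : V → ℤ} (hQ : IsPoly d Q) : Q 0 = 0 := hQ.succ.1

/-- Finitary polynomial van der Waerden property of a finite family. -/
def Gd (v : ℕ → V) (Φ : Finset (V → ℤ)) : Prop :=
  ∀ (κ : Type) [Finite κ] (N : ℕ), ∃ (W : Finset ℤ) (n : ℕ), ∀ c : ℤ → κ,
    ∃ a ∈ W, ∃ h : Finset ℕ, h.Nonempty ∧ h ⊆ Finset.Ioc N n ∧
      ∀ φ ∈ Φ, c (a + φ (∑ t ∈ h, v t)) = c a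

open Classical in
theorem focus (v : ℕ → V) (Φ : Finset (V → ℤ)) (hΦ : ∀ φ ∈ Φ, φ 0 = 0) (ψ : V → ℤ)
    (H : ∀ Y : Finset V, Gd v
      (Finset.image₂ (fun (φ : V → ℤ) (y : V) => fun z => φ (y + z) - φ y - ψ z) Φ Y)) :
    Gd v Φ := by
  intro κ _ N
  have := Fintype.ofFinite κ
  have key : ∀ k : ℕ, ∃ (W : Finset ℤ) (n : ℕ), ∀ c : ℤ → κ,
      (∃ a ∈ W, ∃ h : Finset ℕ, h.Nonempty ∧ h ⊆ Finset.Ioc N n ∧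
        ∀ φ ∈ Φ, c (a + φ (∑ t ∈ h, v t)) = c a) ∨
      (∃ a ∈ W, ∃ K : Finset κ, K.card = k ∧ c a ∉ K ∧ ∀ q ∈ K,
        ∃ s : Finset ℕ, s.Nonempty ∧ s ⊆ Finset.Ioc N n ∧
          ∀ φ ∈ Φ, c (a + φ (∑ t ∈ s, v t)) = q) := by
    intro k
    induction k with
    | zero =>
      refine ⟨{0}, 0, fun c => Or.inr ⟨0, by simp, ∅, by simp, by simp, by simp⟩⟩
    | succ k ih =>
      obtain ⟨W, n, hW⟩ := ih
      set Y : Finset V := (Finset.Ioc N n).powerset.image (fun s => ∑ t ∈ s, v t) with hY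
      have h0Y : (0 : V) ∈ Y := by
        rw [hY, Finset.mem_image]; exact ⟨∅, by simp, by simp⟩
      set U : Finset ℤ := W ∪ Finset.image₂ (fun w x => w + x) W
        (Finset.image₂ (fun (φ : V → ℤ) (y : V) => φ y) Φ Y) with hU
      obtain ⟨W', n', hW'⟩ := H Y (U → κ) (max N n)
      refine ⟨Finset.image₂ (fun w x => w + x) W' W ∪
        Finset.image₂ (fun w s => w - ψ (∑ t ∈ s, v t))
          (Finset.image₂ (fun w x => w + x) W' W) (Finset.Ioc (max N n) n').powerset,
        max n n', fun c => ?_⟩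
      obtain ⟨b, hb, h, hne, hh, hc⟩ := hW' (fun x u => c (x + u))
      have hsub1 : Finset.Ioc N n ⊆ Finset.Ioc N (max n n') := by
        intro t; simp only [Finset.mem_Ioc]; omega
      have hsub2 : h ⊆ Finset.Ioc N (max n n') := by
        intro t ht; have := hh ht; simp only [Finset.mem_Ioc] at *; omega
      have hdisj : ∀ s ⊆ Finset.Ioc N n, Disjoint s h := by
        intro s hs
        rw [Finset.disjoint_left]
        intro t h1 h2
        have := hs h1; have := hh h2
        simp only [Finset.mem_Ioc] at *; omega
      have hcc : ∀ φ ∈ Φ, ∀ y ∈ Y, ∀ u ∈ U,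
          c (b + (φ (y + ∑ t ∈ h, v t) - φ y - ψ (∑ t ∈ h, v t)) + u) = c (b + u) := by
        intro φ hφ y hy u hu
        have := hc _ (Finset.mem_image₂_of_mem hφ hy)
        exact congrFun this ⟨u, hu⟩
      rcases hW (fun x => c (b + x)) with ⟨a, ha, s, hs, hs', hsc⟩ | ⟨a, ha, K, hK, haK, hKs⟩
      · left
        refine ⟨b + a, Finset.mem_union_left _ (Finset.mem_image₂_of_mem hb ha), s, hs,
          hs'.trans hsub1, fun φ hφ => ?_⟩
        rw [add_assoc]; exact hsc φ hφ
      · set a' := b + a - ψ (∑ t ∈ h, v t) with ha'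
        have ha'W : a' ∈ Finset.image₂ (fun w x => w + x) W' W ∪
            Finset.image₂ (fun w s => w - ψ (∑ t ∈ s, v t))
              (Finset.image₂ (fun w x => w + x) W' W) (Finset.Ioc (max N n) n').powerset := by
          apply Finset.mem_union_right
          exact Finset.mem_image₂_of_mem (Finset.mem_image₂_of_mem hb ha)
            (Finset.mem_powerset.2 hh)
        have hnew : ∀ q ∈ insert (c (b + a)) K, ∃ s : Finset ℕ, s.Nonempty ∧
            s ⊆ Finset.Ioc N (max n n') ∧ ∀ φ ∈ Φ, c (a' + φ (∑ t ∈ s, v t)) = q := by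
          intro q hq
          rw [Finset.mem_insert] at hq
          rcases hq with rfl | hq
          · refine ⟨h, hne, hsub2, fun φ hφ => ?_⟩
            rw [← hcc φ hφ 0 h0Y a (Finset.mem_union_left _ ha)]
            congr 1
            rw [hΦ φ hφ, zero_add, ha']; ring
          · obtain ⟨s, hs, hs', hsc⟩ := hKs q hq
            refine ⟨s ∪ h, hs.mono Finset.subset_union_left,
              Finset.union_subset (hs'.trans hsub1) hsub2, fun φ hφ => ?_⟩
            have hyY : ∑ t ∈ s, v t ∈ Y := by
              rw [hY, Finset.mem_image]; exact ⟨s, Finset.mem_powerset.2 hs', rfl⟩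
            rw [Finset.sum_union (hdisj s hs'), ← hsc φ hφ]
            have := hcc φ hφ _ hyY (a + φ (∑ t ∈ s, v t)) (Finset.mem_union_right _
              (Finset.mem_image₂_of_mem ha (Finset.mem_image₂_of_mem hφ hyY)))
            rw [← this]
            congr 1
            rw [ha']; ring
        by_cases hin : c a' ∈ insert (c (b + a)) K
        · left
          obtain ⟨s, h1, h2, h3⟩ := hnew _ hin
          exact ⟨a', ha'W, s, h1, h2, h3⟩
        · right
          refine ⟨a', ha'W, insert (c (b + a)) K, ?_, hin, hnew⟩
          rw [Finset.card_insert_of_notMem haK, hK]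
  obtain ⟨W, n, hW⟩ := key (Fintype.card κ + 1)
  refine ⟨W, n, fun c => ?_⟩
  rcases hW c with h | ⟨a, _, K, hK, _⟩
  · exact h
  · have := Finset.card_le_univ K
    omega

theorem Gd.of_filter (v : ℕ → V) (Φ Ψ : Finset (V → ℤ)) (h : ∀ φ ∈ Φ, φ ≠ 0 → φ ∈ Ψ)
    (hΨ : Gd v Ψ) : Gd v Φ := by
  intro κ _ N
  obtain ⟨W, n, hW⟩ := hΨ κ N
  refine ⟨W, n, fun c => ?_⟩
  obtain ⟨a, ha, s, h1, h2, h3⟩ := hW c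
  refine ⟨a, ha, s, h1, h2, fun φ hφ => ?_⟩
  by_cases h0 : φ = 0
  · simp [h0]
  · exact h3 φ (h φ hφ h0)

theorem Gd.empty (v : ℕ → V) : Gd v ∅ := by
  intro κ _ N
  refine ⟨{0}, N + 1, fun c => ⟨0, by simp, {N + 1}, by simp, by simp, by simp⟩⟩

/-- Covering of a family by representatives of classes modulo lower degree. -/
def Cov {D : ℕ} (K : Fin D → Finset (V → ℤ)) (Φ : Finset (V → ℤ)) : Prop :=
  ∀ Q ∈ Φ, ∃ i : Fin D, ∃ k ∈ K i, IsPoly ((i : ℕ) + 1) Q ∧ IsPoly (i : ℕ) (Q - k)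

open Classical in
theorem pet (v : ℕ → V) (D : ℕ) : ∀ (w : Fin D → ℕ) (K : Fin D → Finset (V → ℤ)),
    (∀ i, (K i).card = w i) → ∀ Φ : Finset (V → ℤ), Cov K Φ → Gd v Φ := by
  have wf : WellFounded (Pi.Lex (β := fun _ : Fin D => ℕ) (fun i j => j < i)
      (fun {_} a b => a < b)) :=
    Pi.Lex.wellFounded (fun i j : Fin D => j < i) (fun _ => wellFounded_lt)
  intro w
  induction w using wf.induction with
  | _ w IH =>
  intro K hKw Φ hcov
  by_cases hne : ∃ i, (K i).Nonempty
  swap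
  · have : Φ = ∅ := by
      rw [Finset.eq_empty_iff_forall_notMem]
      intro Q hQ
      obtain ⟨i, k, hk, _⟩ := hcov Q hQ
      exact hne ⟨i, k, hk⟩
    rw [this]; exact Gd.empty v
  obtain ⟨i, hi, hmin⟩ : ∃ i, (K i).Nonempty ∧ ∀ j < i, K j = ∅ := by
    have hs : (Finset.univ.filter fun i => (K i).Nonempty).Nonempty := by
      obtain ⟨i, hi⟩ := hne
      exact ⟨i, by simpa using hi⟩
    refine ⟨_, (Finset.mem_filter.1 (Finset.min'_mem _ hs)).2, fun j hj => ?_⟩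
    by_contra hcon
    have hj' : j ∈ Finset.univ.filter fun i => (K i).Nonempty := by
      simpa [Finset.nonempty_iff_ne_empty] using hcon
    have := Finset.min'_le _ j hj'
    exact absurd hj (not_lt.2 this)
  obtain ⟨k0, hk0⟩ := hi
  by_cases hψ : ∃ ψ ∈ Φ, IsPoly ((i : ℕ) + 1) ψ ∧ IsPoly (i : ℕ) (ψ - k0)
  swap
  · refine IH (fun j => ((Function.update K i ((K i).erase k0)) j).card) ?_
      (Function.update K i ((K i).erase k0)) (fun _ => rfl) Φ ?_
    · refine ⟨i, fun j hj => ?_, ?_⟩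
      · simp only [Function.update_of_ne (ne_of_gt hj)]; exact hKw j
      · simp only [Function.update_self]
        rw [← hKw i]; exact Finset.card_erase_lt_of_mem hk0
    · intro Q hQ
      obtain ⟨j, k, hk, h1, h2⟩ := hcov Q hQ
      refine ⟨j, k, ?_, h1, h2⟩
      by_cases hj : j = i
      · subst hj
        rw [Function.update_self, Finset.mem_erase]
        refine ⟨?_, hk⟩
        rintro rfl
        exact hψ ⟨Q, hQ, h1, h2⟩
      · rw [Function.update_of_ne hj]; exact hk
  obtain ⟨ψ, hψΦ, hψ1, hψ2⟩ := hψ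
  have hΦ0 : ∀ φ ∈ Φ, φ 0 = 0 := by
    intro φ hφ
    obtain ⟨j, k, _, h1, _⟩ := hcov φ hφ
    exact h1.map_zero
  refine focus v Φ hΦ0 ψ (fun Y => ?_)
  set Φ' := Finset.image₂ (fun (φ : V → ℤ) (y : V) => fun z => φ (y + z) - φ y - ψ z) Φ Y with hΦ'
  refine Gd.of_filter v Φ' (Φ'.filter (· ≠ 0)) (fun φ hφ h0 => Finset.mem_filter.2 ⟨hφ, h0⟩) ?_
  set K' : Fin D → Finset (V → ℤ) := fun j =>
    if i < j then K j else if j = i then ((K i).erase k0).image (fun k => k - k0) else Φ' with hK'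
  refine IH (fun j => (K' j).card) ?_ K' (fun _ => rfl) _ ?_
  · refine ⟨i, fun j hj => ?_, ?_⟩
    · simp only [hK', if_pos hj]; exact hKw j
    · simp only [hK', lt_irrefl, if_false, if_true]
      refine lt_of_le_of_lt Finset.card_image_le ?_
      rw [← hKw i]; exact Finset.card_erase_lt_of_mem hk0
  · intro R hR
    obtain ⟨hRΦ, hR0⟩ := Finset.mem_filter.1 hR
    obtain ⟨Q, hQ, y, hy, rfl⟩ := Finset.mem_image₂.1 hRΦ
    obtain ⟨j, k, hk, h1, h2⟩ := hcov Q hQ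
    have hij : i ≤ j := by
      by_contra hcon
      rw [hmin j (not_le.1 hcon)] at hk
      simp at hk
    have hij' : (i : ℕ) ≤ j := hij
    have hDy := h1.2 y
    have e1 : (fun z => Q (y + z) - Q y - ψ z) = Q + (fun z => Q (y + z) - Q y - Q z) - ψ := by
      funext z; simp only [Pi.add_apply, Pi.sub_apply]; ring
    have hR1 : IsPoly ((j : ℕ) + 1) (fun z => Q (y + z) - Q y - ψ z) := by
      rw [e1]
      exact (h1.add hDy.succ).sub (hψ1.mono (by omega))
    rcases lt_or_eq_of_le hij with hlt | rfl
    · refine ⟨j, k, by simp only [hK', if_pos hlt]; exact hk, hR1, ?_⟩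
      have hlt' : (i : ℕ) < j := hlt
      have e2 : (fun z => Q (y + z) - Q y - ψ z) - k =
          (Q - k) + (fun z => Q (y + z) - Q y - Q z) - ψ := by rw [e1]; abel
      rw [e2]
      exact (h2.add hDy).sub (hψ1.mono hlt')
    · by_cases hkk : k = k0
      · subst hkk
        have hR2 : IsPoly (i : ℕ) (fun z => Q (y + z) - Q y - ψ z) := by
          have e2 : (fun z => Q (y + z) - Q y - ψ z) =
            (Q - k) + (fun z => Q (y + z) - Q y - Q z) - (ψ - k) := by rw [e1]; abel
          rw [e2]
          exact (h2.add hDy).sub hψ2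
        obtain ⟨i, hiD⟩ := i
        cases i with
        | zero => exact absurd hR2 hR0
        | succ i =>
          have hlt : (⟨i, by omega⟩ : Fin D) < ⟨i + 1, hiD⟩ := by
            rw [Fin.lt_def]; simp
          refine ⟨⟨i, by omega⟩, (fun z => Q (y + z) - Q y - ψ z), ?_, hR2, ?_⟩
          · simp only [hK', if_neg (not_lt.2 hlt.le), if_neg hlt.ne]
            exact hRΦ
          · rw [sub_self]; exact IsPoly.zero _
      · refine ⟨i, k - k0, ?_, hR1, ?_⟩
        · simp only [hK', lt_irrefl, if_false, if_true]
          exact Finset.mem_image_of_mem _ (Finset.mem_erase.2 ⟨hkk, hk⟩)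
        · have e2 : (fun z => Q (y + z) - Q y - ψ z) - (k - k0) =
            (Q - k) + (fun z => Q (y + z) - Q y - Q z) - (ψ - k0) := by rw [e1]; abel
          rw [e2]
          exact (h2.add hDy).sub hψ2

theorem pvdw (v : ℕ → V) (Φ : Finset (V → ℤ)) (h : ∀ Q ∈ Φ, ∃ d, IsPoly d Q) : Gd v Φ := by
  classical
  choose! d hd using h
  set D := Φ.sup d with hD
  refine pet v (D + 1) (fun _ => Φ.card) (fun _ => Φ) (fun _ => rfl) Φ (fun Q hQ => ?_)
  refine ⟨Fin.last D, Q, hQ, ?_, ?_⟩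
  · exact (hd Q hQ).mono (by
      have : d Q ≤ D := Finset.le_sup (f := d) hQ
      simp; omega)
  · rw [sub_self]; exact IsPoly.zero _

end PET

theorem isPoly_eval {ι : Type} (f : ι) (d : ℕ) : ∀ P : Polynomial ℤ, P.natDegree ≤ d →
    P.coeff 0 = 0 → IsPoly d (fun z : ι → ℤ => P.eval (z f)) := by
  induction d with
  | zero =>
    intro P hP h0
    have : P = 0 := by
      rw [Polynomial.eq_C_of_natDegree_le_zero hP, h0, Polynomial.C_0]
    subst this
    funext z; simp
  | succ d ih =>
    intro P hP h0
    refine ⟨by simp [← Polynomial.coeff_zero_eq_eval_zero, h0], fun y => ?_⟩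
    have hev := ih (Polynomial.taylor (y f) P - P - Polynomial.C (P.eval (y f))) ?_ ?_
    · convert hev using 1
      funext z
      simp [Polynomial.taylor_eval, add_comm]
      ring
    · rw [Polynomial.natDegree_sub_C]
      by_cases hP0 : P = 0
      · simp [hP0]
      have hl : (Polynomial.taylor (y f) P - P).degree < (Polynomial.taylor (y f) P).degree :=
        Polynomial.degree_sub_lt_left (Polynomial.degree_taylor P (y f))
          (by rwa [Ne, Polynomial.taylor_eq_zero]) (Polynomial.leadingCoeff_taylor _ _)
      rw [Polynomial.degree_taylor] at hl
      by_cases hz : Polynomial.taylor (y f) P - P = 0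
      · simp [hz]
      have := Polynomial.natDegree_lt_natDegree hz hl
      omega
    · simp [Polynomial.taylor_coeff_zero, h0]

/-- Polynomial J-sets. -/
def JP (A : Set ℕ) : Prop :=
  ∀ R : Finset (ℕ → ℕ), (∀ P ∈ R, IsPolyZeroConst P) → ∀ (F : Finset (ℕ → ℕ)) (N : ℕ),
    ∃ (a : ℕ) (h : Finset ℕ), h.Nonempty ∧ (∀ t ∈ h, N < t) ∧
      ∀ P ∈ R, ∀ f ∈ F, a + P (∑ t ∈ h, f t) ∈ A

theorem pvdw_nat (κ : Type) [Finite κ] (c : ℕ → κ) (R : Finset (ℕ → ℕ))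
    (hR : ∀ P ∈ R, IsPolyZeroConst P) (F : Finset (ℕ → ℕ)) (N : ℕ) :
    ∃ (a : ℕ) (h : Finset ℕ), h.Nonempty ∧ (∀ t ∈ h, N < t) ∧
      ∀ P ∈ R, ∀ f ∈ F, c (a + P (∑ t ∈ h, f t)) = c a := by
  classical
  choose! p hp0 hp using hR
  set v : ℕ → ((ℕ → ℕ) → ℤ) := fun t f => (f t : ℤ) with hv
  set Φ : Finset (((ℕ → ℕ) → ℤ) → ℤ) := Finset.image₂
    (fun (P f : ℕ → ℕ) => fun z => ((p P).map (Nat.castRingHom ℤ)).eval (z f)) R F with hΦ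
  have hg : Gd v Φ := by
    apply pvdw
    intro Q hQ
    obtain ⟨P, hP, f, hf, rfl⟩ := Finset.mem_image₂.1 hQ
    refine ⟨((p P).map (Nat.castRingHom ℤ)).natDegree, isPoly_eval f _ _ le_rfl ?_⟩
    simp [Polynomial.coeff_map, hp0 P hP]
  obtain ⟨W, n, hW⟩ := hg κ N
  obtain ⟨B, hB⟩ : ∃ B : ℕ, ∀ w ∈ W, 0 ≤ w + B := by
    refine ⟨∑ w ∈ W, w.natAbs, fun w hw => ?_⟩
    have := Finset.single_le_sum (f := fun w : ℤ => w.natAbs) (fun _ _ => Nat.zero_le _) hw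
    omega
  obtain ⟨a, ha, h, hne, hh, hc⟩ := hW (fun x => c (x + B).toNat)
  refine ⟨(a + B).toNat, h, hne, fun t ht => (Finset.mem_Ioc.1 (hh ht)).1, fun P hP f hf => ?_⟩
  have h1 := hc _ (Finset.mem_image₂_of_mem hP hf)
  rw [← h1]
  congr 1
  have h2 : (∑ t ∈ h, v t) f = ((∑ t ∈ h, f t : ℕ) : ℤ) := by
    rw [Finset.sum_apply]; push_cast; rfl
  have h3 : ((p P).map (Nat.castRingHom ℤ)).eval ((∑ t ∈ h, f t : ℕ) : ℤ) =
      ((P (∑ t ∈ h, f t) : ℕ) : ℤ) := by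
    rw [hp P hP, Polynomial.eval_natCast_map]; rfl
  rw [h2, h3]
  have := hB a ha
  omega

attribute [local instance] Ultrafilter.add Ultrafilter.addSemigroup

theorem exists_p : ∃ p : Ultrafilter ℕ, p + p = p ∧ ∀ A ∈ p, JP A := by
  classical
  set J : Set (Ultrafilter ℕ) := {p | ∀ A ∈ p, JP A} with hJ
  have hcl : IsClosed J := by
    have : J = ⋂ A ∈ {A : Set ℕ | ¬ JP A}, {p : Ultrafilter ℕ | Aᶜ ∈ p} := by
      ext p
      simp only [hJ, Set.mem_ofPred_eq, Set.mem_iInter, Ultrafilter.compl_mem_iff_notMem]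
      exact forall_congr' fun A => not_imp_not.symm
    rw [this]
    exact isClosed_biInter fun A _ => ultrafilter_isClosed_basic _
  have hne : J.Nonempty := by
    have hN : (Filter.generate {B : Set ℕ | ¬ JP Bᶜ}).NeBot := by
      rw [Filter.generate_neBot_iff]
      intro t ht hfin
      by_contra hcon
      have hcol : ∀ x : ℕ, ∃ B : t, x ∈ (B : Set ℕ)ᶜ := by
        intro x
        by_contra hx
        push Not at hx
        apply hcon
        refine ⟨x, fun B hB => ?_⟩
        have := hx ⟨B, hB⟩
        simpa using this
      choose c hc using hcol
      have : Finite t := hfin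
      have := Fintype.ofFinite t
      have hw : ∀ B : t, ¬ JP (B : Set ℕ)ᶜ := fun B => ht B.2
      unfold JP at hw
      push Not at hw
      choose R hR F N hw using hw
      obtain ⟨a, h, h1, h2, h3⟩ := pvdw_nat t c (Finset.univ.biUnion R)
        (fun P hP => by
          obtain ⟨B, _, hB⟩ := Finset.mem_biUnion.1 hP
          exact hR B P hB) (Finset.univ.biUnion F) (Finset.univ.sup N)
      obtain ⟨P, hP, f, hf, hbad⟩ := hw (c a) a h h1 (fun t ht =>
        lt_of_le_of_lt (Finset.le_sup (f := N) (Finset.mem_univ (c a))) (h2 t ht))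
      apply hbad
      have := h3 P (Finset.mem_biUnion.2 ⟨_, Finset.mem_univ _, hP⟩) f
        (Finset.mem_biUnion.2 ⟨_, Finset.mem_univ _, hf⟩)
      rw [← this]
      exact hc _
    refine ⟨Ultrafilter.of (Filter.generate {B : Set ℕ | ¬ JP Bᶜ}), fun A hA => ?_⟩
    by_contra hcon
    have : Aᶜ ∈ Ultrafilter.of (Filter.generate {B : Set ℕ | ¬ JP Bᶜ}) :=
      Ultrafilter.of_le _ (Filter.mem_generate_of_mem (by simpa using hcon))
    exact Ultrafilter.compl_mem_iff_notMem.1 this hA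
  obtain ⟨p, hp, hpp⟩ := exists_idempotent_in_compact_add_subsemigroup
    (M := Ultrafilter ℕ) Ultrafilter.continuous_add_left J hne hcl.isCompact (by
      intro U hU V hV A hA R hR F N
      have h1 : ∀ᶠ m in (U : Filter ℕ), ∀ᶠ m' in (V : Filter ℕ), m + m' ∈ A :=
        (Ultrafilter.eventually_add U V (· ∈ A)).1 hA
      obtain ⟨m, hm⟩ := h1.exists
      obtain ⟨a, h, h1, h2, h3⟩ := hV {m' | m + m' ∈ A} hm R hR F N
      exact ⟨m + a, h, h1, h2, fun P hP f hf => by rw [add_assoc]; exact h3 P hP f hf⟩)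
  exact ⟨p, hpp, hp⟩

/-- The star of a set with respect to an ultrafilter. -/
def Star (p : Ultrafilter ℕ) (A : Set ℕ) : Set ℕ :=
  {v | v ∈ A ∧ ∀ᶠ w in (p : Filter ℕ), v + w ∈ A}

theorem star_mem_s12 {p : Ultrafilter ℕ} (hp : p + p = p) {A : Set ℕ} (hA : A ∈ p) : Star p A ∈ p := by
  have h1 : ∀ᶠ m in (p : Filter ℕ), ∀ᶠ m' in (p : Filter ℕ), m + m' ∈ A := by
    rw [← Ultrafilter.eventually_add p p (· ∈ A), hp]; exact hA
  exact Filter.inter_mem hA h1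

theorem star_add {p : Ultrafilter ℕ} (hp : p + p = p) {A : Set ℕ} {v : ℕ} (hv : v ∈ Star p A) :
    ∀ᶠ w in (p : Filter ℕ), v + w ∈ Star p A := by
  have h := star_mem_s12 hp (A := {w | v + w ∈ A}) hv.2
  filter_upwards [h] with w hw
  refine ⟨hw.1, ?_⟩
  filter_upwards [hw.2] with x hx
  rw [add_assoc]; exact hx

theorem shift_poly {P : ℕ → ℕ} (hP : IsPolyZeroConst P) (y : ℕ) :
    ∃ Q : ℕ → ℕ, IsPolyZeroConst Q ∧ ∀ z, P (y + z) = P y + Q z := by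
  obtain ⟨q, _, hq⟩ := hP
  set s := Polynomial.taylor y q with hs
  refine ⟨fun z => (s.divX * Polynomial.X).eval z, ⟨_, by simp, fun _ => rfl⟩, fun z => ?_⟩
  have h1 := congrArg (Polynomial.eval z) (Polynomial.divX_mul_X_add s)
  rw [Polynomial.eval_add, Polynomial.eval_C, hs, Polynomial.taylor_coeff_zero,
    Polynomial.taylor_eval] at h1
  rw [hq, hq, add_comm y z, ← h1, add_comm]

theorem IsPolyZeroConst.map_zero {P : ℕ → ℕ} (hP : IsPolyZeroConst P) : P 0 = 0 := by
  obtain ⟨q, h0, hq⟩ := hP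
  rw [hq, ← Polynomial.coeff_zero_eq_eval_zero, h0]

/-- States of the recursive construction. -/
structure State where
  n : ℕ
  C : Set (Fin (n + 1) → ℕ)
  x : ℕ
  y : ℕ

/-- The set of admissible next values. -/
def State.A (p : Ultrafilter ℕ) (s : State) : Set ℕ :=
  {v | {w : Fin s.n → ℕ | (Fin.cons v w : Fin (s.n + 1) → ℕ) ∈ s.C} ∈ tensor s.n fun _ => p}

/-- Validity of a state. -/
def State.Valid (T : Finset (ℕ → ℕ)) (p : Ultrafilter ℕ) (s : State) : Prop :=
  ∀ P ∈ T, ∀ᶠ w in (p : Filter ℕ), s.x + P s.y + w ∈ Star p (s.A p)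

/-- Continue the current block. -/
def State.cont (s : State) (a z : ℕ) : State := ⟨s.n, s.C, s.x + a, s.y + z⟩

/-- Close the current block with value `v`. -/
def State.close : State → ℕ → State
  | ⟨0, C, x, y⟩, _ => ⟨0, C, x, y⟩
  | ⟨k + 1, C, _, _⟩, v => ⟨k, {w | (Fin.cons v w : Fin (k + 2) → ℕ) ∈ C}, 0, 0⟩

theorem tensor_succ_mem (p : Ultrafilter ℕ) (k : ℕ) (C : Set (Fin (k + 1) → ℕ)) :
    C ∈ tensor (k + 1) (fun _ => p) ↔ ∀ᶠ v in (p : Filter ℕ),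
      {w : Fin k → ℕ | (Fin.cons v w : Fin (k + 1) → ℕ) ∈ C} ∈ tensor k fun _ => p := by
  rfl

theorem valid_start {T : Finset (ℕ → ℕ)} (hTP : ∀ P ∈ T, IsPolyZeroConst P)
    {p : Ultrafilter ℕ} (hp : p + p = p)
    (k : ℕ) (C : Set (Fin (k + 1) → ℕ)) (hC : C ∈ tensor (k + 1) (fun _ => p)) :
    (State.mk k C 0 0).Valid T p := by
  intro P hP
  simp only [(hTP P hP).map_zero, zero_add]
  exact star_mem_s12 hp (A := State.A p ⟨k, C, 0, 0⟩) ((tensor_succ_mem p k C).1 hC)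

theorem valid_close {T : Finset (ℕ → ℕ)} (hTP : ∀ P ∈ T, IsPolyZeroConst P)
    {p : Ultrafilter ℕ} (hp : p + p = p) (s : State) (hs : s.Valid T p) (v : ℕ)
    (hv : v ∈ s.A p) : (s.close v).Valid T p := by
  obtain ⟨n, C, x, y⟩ := s
  cases n with
  | zero => exact hs
  | succ k => exact valid_start hTP hp k _ hv

theorem valid_cont {T : Finset (ℕ → ℕ)}
    {p : Ultrafilter ℕ} (hp : p + p = p) (s : State) (a z : ℕ)
    (h : ∀ P ∈ T, s.x + a + P (s.y + z) ∈ Star p (s.A p)) : (s.cont a z).Valid T p := by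
  intro P hP
  exact star_add hp (h P hP)

theorem choose_step {T : Finset (ℕ → ℕ)} (hTP : ∀ P ∈ T, IsPolyZeroConst P)
    {p : Ultrafilter ℕ} (hJ : ∀ A ∈ p, JP A) (S : Set State) (hS : S.Finite)
    (hval : ∀ s ∈ S, s.Valid T p) (G : Finset (ℕ → ℕ)) (N : ℕ) :
    ∃ (a : ℕ) (h : Finset ℕ), h.Nonempty ∧ (∀ t ∈ h, N < t) ∧
      ∀ s ∈ S, ∀ f ∈ G, ∀ P ∈ T, s.x + a + P (s.y + ∑ t ∈ h, f t) ∈ Star p (s.A p) := by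
  classical
  choose! Q hQ1 hQ2 using fun (P : ℕ → ℕ) (hP : IsPolyZeroConst P) (y : ℕ) => shift_poly hP y
  have hB : {w | ∀ s ∈ S, ∀ P ∈ T, s.x + P s.y + w ∈ Star p (s.A p)} ∈ p := by
    change ∀ᶠ w in (p : Filter ℕ), ∀ s ∈ S, ∀ P ∈ T, s.x + P s.y + w ∈ Star p (s.A p)
    rw [Filter.eventually_all_finite hS]
    intro s hs
    rw [Filter.eventually_all_finset]
    exact hval s hs
  obtain ⟨a, h, h1, h2, h3⟩ := hJ _ hB
    (Finset.image₂ (fun s P => Q P s.y) hS.toFinset T) (by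
      intro R hR
      obtain ⟨s, hs, P, hP, rfl⟩ := Finset.mem_image₂.1 hR
      exact hQ1 P (hTP P hP) _) G N
  refine ⟨a, h, h1, h2, fun s hs f hf P hP => ?_⟩
  have := h3 _ (Finset.mem_image₂_of_mem (hS.mem_toFinset.2 hs) hP) f hf s hs P hP
  rw [hQ2 P (hTP P hP)]
  convert this using 1
  ring

theorem wf_build {X : Type} {r : X → X → Prop} (wf : WellFounded r) {D : Type}
    (Inv : X → D → Prop) (R : X → X → D → D → Prop)
    (h : ∀ G (prev : X → D), (∀ F, r F G → Inv F (prev F)) →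
      ∃ d, Inv G d ∧ ∀ F, r F G → R F G (prev F) d) (d0 : D) :
    ∃ g : X → D, ∀ G, Inv G (g G) ∧ ∀ F, r F G → R F G (g F) (g G) := by
  classical
  have : Nonempty D := ⟨d0⟩
  have h' : ∀ G (prev : X → D), ∃ d, (∀ F, r F G → Inv F (prev F)) →
      Inv G d ∧ ∀ F, r F G → R F G (prev F) d := by
    intro G prev
    by_cases hc : ∀ F, r F G → Inv F (prev F)
    · obtain ⟨d, hd⟩ := h G prev hc
      exact ⟨d, fun _ => hd⟩
    · exact ⟨d0, fun hh => absurd hh hc⟩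
  choose nx hnx using h'
  have h1 := fun G prev hh => (hnx G prev hh).1
  have h2 := fun G prev hh => (hnx G prev hh).2
  set g : X → D := wf.fix (fun G ih => nx G (fun F => if hF : r F G then ih F hF else d0)) with hg
  have hfix : ∀ G, g G = nx G (fun F => if r F G then g F else d0) := by
    intro G
    rw [hg, wf.fix_eq]
    congr 1
  have hInv : ∀ G, Inv G (g G) := by
    intro G
    induction G using wf.induction with
    | _ G ih =>
      rw [hfix]
      apply h1
      intro F hF
      rw [if_pos hF]; exact ih F hF
  refine ⟨g, fun G => ⟨hInv G, fun F hF => ?_⟩⟩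
  have := h2 G (fun F => if r F G then g F else d0) (fun F hF => by
    rw [if_pos hF]; exact hInv F) F hF
  rw [if_pos hF, ← hfix] at this
  exact this

theorem build {T : Finset (ℕ → ℕ)} (hTP : ∀ P ∈ T, IsPolyZeroConst P)
    {p : Ultrafilter ℕ} (hp : p + p = p) (hJ : ∀ A ∈ p, JP A) (s0 : State)
    (hs0 : s0.Valid T p) :
    ∃ (α : Finset (ℕ → ℕ) → ℕ) (H : Finset (ℕ → ℕ) → Finset ℕ) (S : Finset (ℕ → ℕ) → Set State),
      (∀ G, (H G).Nonempty) ∧ (∀ F G, F ⊂ G → ∀ x ∈ H F, ∀ y ∈ H G, x < y) ∧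
      (∀ G, s0 ∈ S G) ∧ (∀ F G, F ⊂ G → S F ⊆ S G) ∧
      (∀ G, ∀ s ∈ S G, ∀ f ∈ G, ∀ P ∈ T,
        s.x + α G + P (s.y + ∑ t ∈ H G, f t) ∈ Star p (s.A p)) ∧
      (∀ F G, F ⊂ G → ∀ s ∈ S F, ∀ f ∈ F, s.cont (α F) (∑ t ∈ H F, f t) ∈ S G) ∧
      (∀ F G, F ⊂ G → ∀ s ∈ S F, ∀ f ∈ F, ∀ P ∈ T,
        s.close (s.x + α F + P (s.y + ∑ t ∈ H F, f t)) ∈ S G) := by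
  classical
  obtain ⟨g, hg⟩ := wf_build (X := Finset (ℕ → ℕ)) (r := (· ⊂ ·)) wellFounded_lt
    (D := ℕ × Finset ℕ × Set State)
    (fun G d => d.2.1.Nonempty ∧ s0 ∈ d.2.2 ∧ d.2.2.Finite ∧ (∀ s ∈ d.2.2, s.Valid T p) ∧
      ∀ s ∈ d.2.2, ∀ f ∈ G, ∀ P ∈ T,
        s.x + d.1 + P (s.y + ∑ t ∈ d.2.1, f t) ∈ Star p (s.A p))
    (fun F _ dF dG => (∀ x ∈ dF.2.1, ∀ y ∈ dG.2.1, x < y) ∧ dF.2.2 ⊆ dG.2.2 ∧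
      (∀ s ∈ dF.2.2, ∀ f ∈ F, s.cont dF.1 (∑ t ∈ dF.2.1, f t) ∈ dG.2.2) ∧
      (∀ s ∈ dF.2.2, ∀ f ∈ F, ∀ P ∈ T,
        s.close (s.x + dF.1 + P (s.y + ∑ t ∈ dF.2.1, f t)) ∈ dG.2.2))
    (by
      intro G prev hprev
      set S : Set State := {s0} ∪ ⋃ F ∈ G.ssubsets, ((prev F).2.2 ∪
        ((⋃ f ∈ F, (fun s : State => s.cont (prev F).1 (∑ t ∈ (prev F).2.1, f t)) '' (prev F).2.2) ∪
        (⋃ f ∈ F, ⋃ P ∈ T, (fun s : State =>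
          s.close (s.x + (prev F).1 + P (s.y + ∑ t ∈ (prev F).2.1, f t))) '' (prev F).2.2)))
        with hS
      have hfin : S.Finite := by
        refine (Set.finite_singleton _).union (Set.Finite.biUnion (Finset.finite_toSet _) ?_)
        intro F hF
        have hf := (hprev F (Finset.mem_ssubsets.1 hF)).2.2.1
        refine hf.union ((Set.Finite.biUnion (Finset.finite_toSet _) ?_).union
          (Set.Finite.biUnion (Finset.finite_toSet _) ?_))
        · intro f _; exact hf.image _
        · intro f _
          refine Set.Finite.biUnion (Finset.finite_toSet _) ?_
          intro P _; exact hf.image _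
      have hval : ∀ s ∈ S, s.Valid T p := by
        intro s hs
        simp only [hS, Set.mem_union, Set.mem_iUnion, Set.mem_singleton_iff, Set.mem_image,
          Finset.mem_ssubsets, exists_prop] at hs
        rcases hs with rfl | ⟨F, hF, h | ⟨f, hf, s, hs, rfl⟩ | ⟨f, hf, P, hP, s, hs, rfl⟩⟩
        · exact hs0
        · exact (hprev F hF).2.2.2.1 s h
        · exact valid_cont hp s _ _ ((hprev F hF).2.2.2.2 s hs f hf)
        · exact valid_close hTP hp s ((hprev F hF).2.2.2.1 s hs) _
            ((hprev F hF).2.2.2.2 s hs f hf P hP).1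
      obtain ⟨a, h, h1, h2, h3⟩ := choose_step hTP hJ S hfin hval G
        (G.ssubsets.sup fun F => (prev F).2.1.sup id)
      refine ⟨(a, h, S), ⟨h1, Or.inl rfl, hfin, hval, h3⟩, fun F hF => ⟨?_, ?_, ?_, ?_⟩⟩
      · intro x hx y hy
        refine lt_of_le_of_lt ?_ (h2 y hy)
        exact (Finset.le_sup (f := id) hx).trans
          (Finset.le_sup (f := fun F => (prev F).2.1.sup id) (Finset.mem_ssubsets.2 hF))
      · intro s hs
        simp only [hS, Set.mem_union, Set.mem_iUnion, Set.mem_singleton_iff, Set.mem_image,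
          Finset.mem_ssubsets, exists_prop]
        exact Or.inr ⟨F, hF, Or.inl hs⟩
      · intro s hs f hf
        simp only [hS, Set.mem_union, Set.mem_iUnion, Set.mem_singleton_iff, Set.mem_image,
          Finset.mem_ssubsets, exists_prop]
        exact Or.inr ⟨F, hF, Or.inr (Or.inl ⟨f, hf, s, hs, rfl⟩)⟩
      · intro s hs f hf P hP
        simp only [hS, Set.mem_union, Set.mem_iUnion, Set.mem_singleton_iff, Set.mem_image,
          Finset.mem_ssubsets, exists_prop]
        exact Or.inr ⟨F, hF, Or.inr (Or.inr ⟨f, hf, P, hP, s, hs, rfl⟩)⟩)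
    (0, ∅, ∅)
  refine ⟨fun G => (g G).1, fun G => (g G).2.1, fun G => (g G).2.2,
    fun G => (hg G).1.1, fun F G hFG => ((hg G).2 F hFG).1, fun G => (hg G).1.2.1,
    fun F G hFG => ((hg G).2 F hFG).2.1, fun G => (hg G).1.2.2.2.2,
    fun F G hFG => ((hg G).2 F hFG).2.2.1, fun F G hFG => ((hg G).2 F hFG).2.2.2⟩

theorem multidim
    (T : Finset (ℕ → ℕ)) (hTP : ∀ P ∈ T, IsPolyZeroConst P)
    (r m : ℕ) (hm : 1 ≤ m) (χ : (Fin m → ℕ) → Fin r) :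
      ∃ (j : Fin r) (α : Finset (ℕ → ℕ) → ℕ) (H : Finset (ℕ → ℕ) → Finset ℕ),
        (∀ F : Finset (ℕ → ℕ), F.Nonempty → (H F).Nonempty) ∧
        (∀ F G : Finset (ℕ → ℕ), F.Nonempty → F ⊂ G →
          ∀ x ∈ H F, ∀ y ∈ H G, x < y) ∧
        (∀ G : ℕ → Finset (ℕ → ℕ),
          (∀ i, (G i).Nonempty) → (∀ i j', i < j' → G i ⊂ G j') →
          ∀ f : ℕ → ℕ → ℕ, (∀ i, f i ∈ G i) →
          ∀ P : Fin m → ℕ → ℕ, (∀ l, P l ∈ T) →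
          ∀ β : Fin m → Finset ℕ,
            (∀ l, (β l).Nonempty) →
            (∀ l l' : Fin m, l < l' → ∀ x ∈ β l, ∀ y ∈ β l', x < y) →
            χ (fun l => (∑ i ∈ β l, α (G i)) +
                P l (∑ i ∈ β l, ∑ t ∈ H (G i), f i t)) = j) := by
  obtain ⟨p, hp, hJ⟩ := exists_p
  obtain ⟨m, rfl⟩ : ∃ k, m = k + 1 := ⟨m - 1, by omega⟩
  obtain ⟨j, hj⟩ := Ultrafilter.eq_pure_of_finite ((tensor (m + 1) fun _ => p).map χ)
  have hC : χ ⁻¹' {j} ∈ tensor (m + 1) (fun _ => p) := by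
    rw [← Ultrafilter.mem_map, hj]; exact Set.mem_singleton j
  obtain ⟨α, H, S, hH, hlt, hinit, hmono, hstar, hcont, hclose⟩ :=
    build hTP hp hJ ⟨m, χ ⁻¹' {j}, 0, 0⟩ (valid_start hTP hp m _ hC)
  refine ⟨j, α, H, fun F _ => hH F, fun F G _ => hlt F G, ?_⟩
  intro G _ hG f hf
  have hmono' : ∀ i k, i ≤ k → S (G i) ⊆ S (G k) := by
    intro i k hik
    rcases hik.lt_or_eq with h | rfl
    · exact hmono _ _ (hG _ _ h)
    · exact subset_rfl
  have hblock : ∀ (n : ℕ) (C : Set (Fin (n + 1) → ℕ)) (i0 : ℕ), State.mk n C 0 0 ∈ S (G i0) →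
      ∀ β : Finset ℕ, (∀ i ∈ β, i0 ≤ i) → ∀ k, i0 ≤ k → (∀ i ∈ β, i < k) →
        State.mk n C (∑ i ∈ β, α (G i)) (∑ i ∈ β, ∑ t ∈ H (G i), f i t) ∈ S (G k) := by
    intro n C i0 h0 β
    induction β using Finset.induction_on_max with
    | empty => intro _ k hk _; simpa using hmono' _ _ hk h0
    | insert b β hb ih =>
      intro hβ k hk hβk
      have hbn : b ∉ β := fun h => lt_irrefl _ (hb b h)
      have h1 := ih (fun i hi => hβ i (Finset.mem_insert_of_mem hi)) b
        (hβ b (Finset.mem_insert_self _ _)) hb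
      have h2 := hcont _ _ (hG b k (hβk b (Finset.mem_insert_self _ _))) _ h1 (f b) (hf b)
      rw [Finset.sum_insert hbn, Finset.sum_insert hbn, add_comm (α (G b)),
        add_comm (∑ t ∈ H (G b), f b t)]
      exact h2
  have hval : ∀ (n : ℕ) (C : Set (Fin (n + 1) → ℕ)) (i0 : ℕ), State.mk n C 0 0 ∈ S (G i0) →
      ∀ β : Finset ℕ, (∀ i ∈ β, i0 ≤ i) → β.Nonempty → ∀ P ∈ T,
        ((∑ i ∈ β, α (G i)) + P (∑ i ∈ β, ∑ t ∈ H (G i), f i t)) ∈ State.A p ⟨n, C, 0, 0⟩ ∧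
        ∀ k, (∀ i ∈ β, i < k) → (State.mk n C 0 0).n = n ∧
          ∃ x y, (State.mk n C x y).close
          ((∑ i ∈ β, α (G i)) + P (∑ i ∈ β, ∑ t ∈ H (G i), f i t)) ∈ S (G k) := by
    intro n C i0 h0 β hβ hne P hP
    set b := β.max' hne with hb
    have hbβ : b ∈ β := Finset.max'_mem _ _
    have h1 := hblock n C i0 h0 (β.erase b) (fun i hi => hβ i (Finset.mem_of_mem_erase hi)) b
      (hβ b hbβ) (fun i hi => Finset.lt_max'_of_mem_erase_max' β hne hi)
    have e1 := Finset.sum_erase_add β (fun i => α (G i)) hbβ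
    have e2 := Finset.sum_erase_add β (fun i => ∑ t ∈ H (G i), f i t) hbβ
    have h2 := hstar _ _ h1 (f b) (hf b) P hP
    simp only at h2 e1 e2
    rw [e1, e2] at h2
    refine ⟨h2.1, fun k hk => ⟨rfl, ?_⟩⟩
    have h3 := hclose _ _ (hG b k (hk b hbβ)) _ h1 (f b) (hf b) P hP
    simp only at h3
    rw [e1, e2] at h3
    exact ⟨_, _, h3⟩
  have main : ∀ (n : ℕ) (C : Set (Fin (n + 1) → ℕ)) (i0 : ℕ), State.mk n C 0 0 ∈ S (G i0) →
      ∀ P : Fin (n + 1) → ℕ → ℕ, (∀ l, P l ∈ T) →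
      ∀ β : Fin (n + 1) → Finset ℕ, (∀ l, (β l).Nonempty) →
      (∀ l l' : Fin (n + 1), l < l' → ∀ x ∈ β l, ∀ y ∈ β l', x < y) →
      (∀ l, ∀ i ∈ β l, i0 ≤ i) →
      (fun l => (∑ i ∈ β l, α (G i)) + P l (∑ i ∈ β l, ∑ t ∈ H (G i), f i t)) ∈ C := by
    intro n
    induction n with
    | zero =>
      intro C i0 h0 P hP β hne hord hβ
      have h1 := (hval 0 C i0 h0 (β 0) (hβ 0) (hne 0) (P 0) (hP 0)).1
      have h2 : (Fin.cons ((∑ i ∈ β 0, α (G i)) + P 0 (∑ i ∈ β 0, ∑ t ∈ H (G i), f i t))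
        (fun i => i.elim0) : Fin 1 → ℕ) ∈ C := h1
      convert h2 using 1
      funext l
      obtain rfl : l = 0 := Fin.ext (by omega)
      rfl
    | succ n ih =>
      intro C i0 h0 P hP β hne hord hβ
      obtain ⟨_, h2⟩ := hval (n + 1) C i0 h0 (β 0) (hβ 0) (hne 0) (P 0) (hP 0)
      obtain ⟨_, x, y, h3⟩ := h2 ((β 0).max' (hne 0) + 1)
        (fun i hi => Nat.lt_succ_of_le (Finset.le_max' _ _ hi))
      have h4 := ih _ _ h3 (fun l => P l.succ) (fun l => hP _) (fun l => β l.succ)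
        (fun l => hne _) (fun l l' hl => hord _ _ (Fin.succ_lt_succ_iff.2 hl))
        (fun l i hi => hord 0 l.succ (Fin.succ_pos l) _ (Finset.max'_mem _ _) i hi)
      have h5 : (Fin.cons ((∑ i ∈ β 0, α (G i)) + P 0 (∑ i ∈ β 0, ∑ t ∈ H (G i), f i t))
        (fun l : Fin (n + 1) => (∑ i ∈ β l.succ, α (G i)) +
          P l.succ (∑ i ∈ β l.succ, ∑ t ∈ H (G i), f i t)) : Fin (n + 2) → ℕ) ∈ C := h4
      convert h5 using 1
      funext l
      refine Fin.cases ?_ (fun l => ?_) l <;> rfl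
  intro P hP β hne hord
  exact main m (χ ⁻¹' {j}) 0 (hinit _) P hP β hne hord (fun _ _ _ => Nat.zero_le _)

/-- Equivalence of the multidimensional monochromatic form and the linear-combination
monochromatic form of the polynomial stronger central sets theorem (single pair of
witnessing functions). -/
theorem equivalence_multidim_vs_linear_comb_I
    (T : Finset (ℕ → ℕ)) (hT : T.Nonempty) (hTP : ∀ P ∈ T, IsPolyZeroConst P) :
    (∀ r m : ℕ, 1 ≤ r → 1 ≤ m → ∀ χ : (Fin m → ℕ) → Fin r,
      ∃ (j : Fin r) (α : Finset (ℕ → ℕ) → ℕ) (H : Finset (ℕ → ℕ) → Finset ℕ),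
        (∀ F : Finset (ℕ → ℕ), F.Nonempty → (H F).Nonempty) ∧
        (∀ F G : Finset (ℕ → ℕ), F.Nonempty → F ⊂ G →
          ∀ x ∈ H F, ∀ y ∈ H G, x < y) ∧
        (∀ G : ℕ → Finset (ℕ → ℕ),
          (∀ i, (G i).Nonempty) → (∀ i j', i < j' → G i ⊂ G j') →
          ∀ f : ℕ → ℕ → ℕ, (∀ i, f i ∈ G i) →
          ∀ P : Fin m → ℕ → ℕ, (∀ l, P l ∈ T) →
          ∀ β : Fin m → Finset ℕ,
            (∀ l, (β l).Nonempty) →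
            (∀ l l' : Fin m, l < l' → ∀ x ∈ β l, ∀ y ∈ β l', x < y) →
            χ (fun l => (∑ i ∈ β l, α (G i)) +
                P l (∑ i ∈ β l, ∑ t ∈ H (G i), f i t)) = j))
    ↔
    (∀ r m : ℕ, 1 ≤ r → 1 ≤ m → ∀ a : Fin m → ℕ, ∀ χ : ℕ → Fin r,
      ∃ (j : Fin r) (α : Finset (ℕ → ℕ) → ℕ) (H : Finset (ℕ → ℕ) → Finset ℕ),
        (∀ F : Finset (ℕ → ℕ), F.Nonempty → (H F).Nonempty) ∧
        (∀ F G : Finset (ℕ → ℕ), F.Nonempty → F ⊂ G →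
          ∀ x ∈ H F, ∀ y ∈ H G, x < y) ∧
        (∀ G : ℕ → Finset (ℕ → ℕ),
          (∀ i, (G i).Nonempty) → (∀ i j', i < j' → G i ⊂ G j') →
          ∀ f : ℕ → ℕ → ℕ, (∀ i, f i ∈ G i) →
          ∀ P : Fin m → ℕ → ℕ, (∀ l, P l ∈ T) →
          ∀ β : Fin m → Finset ℕ,
            (∀ l, (β l).Nonempty) →
            (∀ l l' : Fin m, l < l' → ∀ x ∈ β l, ∀ y ∈ β l', x < y) →
            χ (∑ l : Fin m, a l * ((∑ i ∈ β l, α (G i)) +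
                P l (∑ i ∈ β l, ∑ t ∈ H (G i), f i t))) = j)) := by
  constructor
  · intro h r m hr hm a χ
    exact h r m hr hm (fun v => χ (∑ l, a l * v l))
  · intro _ r m _ hm χ
    exact multidim T hTP r m hm χ

end MultiCST
end
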